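/- Let N and m be positive integers with N > 2m and let β be a real number with 0 < β < N−2m. Then there exists a constant C > 0 such that for every y ∈ ℝ^N, ∫_{ℝ^N} |y−z|^{−(N−2m)}·(1+|z|)^{−(2m+β)} dz ≤ C·(1+|y|)^{−β}. -/

import Mathlib

/-!
Put `a = N - 2m`, `k = 2m + β` and `R = 1 + ‖y‖`, so that `a < N`, `k < N` and `N - a - k = -β`.
Up to the null set `{0}`, the integrand is at most the sum of three functions, according to the
position of `z`:

* if `‖y - z‖ ≤ R / 2`, then `1 + ‖z‖ ≥ R / 2`, and the integrand is at most
  `(R / 2) ^ (-k) * ‖y - z‖ ^ (-a)`;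
* if `‖y - z‖ > R / 2` and `‖z‖ ≤ 2 R`, it is at most `(R / 2) ^ (-a) * ‖z‖ ^ (-k)`;
* if `‖z‖ > 2 R`, then `‖y - z‖ ≥ ‖z‖ / 2`, and it is at most `2 ^ a * ‖z‖ ^ (-(a + k))`.

The truncated powers of the norm on the right are integrated in polar coordinates
(`integral_ball_norm_rpow`, `integral_compl_ball_norm_rpow`), and each of the three integrals is a
constant multiple of `R ^ (N - a - k) = R ^ (-β)`.
-/

open MeasureTheory

/-- Integration in polar coordinates of a power of the norm, cut off to a set `S` of positive
radii. -/
lemma integral_radial_norm_rpow (N : ℕ) (hN : 1 ≤ N) (s : ℝ) (S : Set ℝ) (hS : MeasurableSet S)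
    (hS0 : S ⊆ Set.Ioi 0) (hint : IntegrableOn (fun t : ℝ => t ^ ((N : ℝ) - 1 - s)) S) :
    Integrable (fun z : EuclideanSpace ℝ (Fin N) => S.indicator (fun t : ℝ => t ^ (-s)) ‖z‖) ∧
    ∫ z : EuclideanSpace ℝ (Fin N), S.indicator (fun t : ℝ => t ^ (-s)) ‖z‖ =
      (N * volume.real (Metric.ball (0 : EuclideanSpace ℝ (Fin N)) 1)) *
        ∫ t in S, t ^ ((N : ℝ) - 1 - s) := by
  have : Nonempty (Fin N) := ⟨⟨0, hN⟩⟩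
  have hfun : Set.EqOn (fun t : ℝ => t ^ (Module.finrank ℝ (EuclideanSpace ℝ (Fin N)) - 1) •
      S.indicator (fun t : ℝ => t ^ (-s)) t)
      (S.indicator fun t : ℝ => t ^ ((N : ℝ) - 1 - s)) (Set.Ioi 0) := by
    intro t ht
    have ht : 0 < t := ht
    by_cases h : t ∈ S
    · simp only [finrank_euclideanSpace, Fintype.card_fin, smul_eq_mul, Set.indicator_of_mem h]
      rw [← Real.rpow_natCast, ← Real.rpow_add ht, Nat.cast_sub hN]
      congr 1
      push_cast
      ring
    · simp [h]
  constructor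
  · rw [integrable_fun_norm_addHaar volume (f := S.indicator fun t : ℝ => t ^ (-s)),
      integrableOn_congr_fun hfun measurableSet_Ioi]
    exact ((integrable_indicator_iff hS).2 hint).integrableOn
  · rw [integral_fun_norm_addHaar volume (S.indicator fun t : ℝ => t ^ (-s)),
      setIntegral_congr_fun measurableSet_Ioi hfun, setIntegral_indicator hS,
      Set.inter_eq_right.2 hS0]
    simp [mul_assoc]

lemma integral_ball_norm_rpow (N : ℕ) (hN : 1 ≤ N) (s : ℝ) (hs : s < N) (r : ℝ) (hr : 0 < r) :
    Integrable (fun z : EuclideanSpace ℝ (Fin N) =>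
      (Set.Ioc 0 r).indicator (fun t : ℝ => t ^ (-s)) ‖z‖) ∧
    ∫ z : EuclideanSpace ℝ (Fin N), (Set.Ioc 0 r).indicator (fun t : ℝ => t ^ (-s)) ‖z‖ =
      (N * volume.real (Metric.ball (0 : EuclideanSpace ℝ (Fin N)) 1)) *
        (r ^ ((N : ℝ) - s) / (N - s)) := by
  have hi : IntegrableOn (fun t : ℝ => t ^ ((N : ℝ) - 1 - s)) (Set.Ioc 0 r) :=
    (intervalIntegrable_iff_integrableOn_Ioc_of_le hr.le).1
      (intervalIntegral.intervalIntegrable_rpow' (by linarith))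
  obtain ⟨h1, h2⟩ := integral_radial_norm_rpow N hN s _ measurableSet_Ioc
    (fun t ht => ht.1) hi
  refine ⟨h1, h2.trans ?_⟩
  rw [← intervalIntegral.integral_of_le hr.le, integral_rpow (Or.inl (by linarith)),
    show (N : ℝ) - 1 - s + 1 = N - s by ring, Real.zero_rpow (by linarith), sub_zero]

lemma integral_compl_ball_norm_rpow (N : ℕ) (hN : 1 ≤ N) (s : ℝ) (hs : N < s) (r : ℝ)
    (hr : 0 < r) :
    Integrable (fun z : EuclideanSpace ℝ (Fin N) =>
      (Set.Ioi r).indicator (fun t : ℝ => t ^ (-s)) ‖z‖) ∧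
    ∫ z : EuclideanSpace ℝ (Fin N), (Set.Ioi r).indicator (fun t : ℝ => t ^ (-s)) ‖z‖ =
      (N * volume.real (Metric.ball (0 : EuclideanSpace ℝ (Fin N)) 1)) *
        (r ^ ((N : ℝ) - s) / (s - N)) := by
  obtain ⟨h1, h2⟩ := integral_radial_norm_rpow N hN s _ measurableSet_Ioi
    (fun t ht => hr.trans ht) (integrableOn_Ioi_rpow_of_lt (by linarith) hr)
  refine ⟨h1, h2.trans ?_⟩
  rw [integral_Ioi_rpow_of_lt (by linarith) hr,
    show (N : ℝ) - 1 - s + 1 = N - s by ring, neg_div, ← div_neg, neg_sub]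

/-- The three-region domination of the integrand, with `p = ‖y - z‖`, `q = ‖z‖` and
`R = 1 + ‖y‖`. -/
lemma kernel_le (a k : ℝ) (ha : 0 < a) (hk : 0 < k) (p q R : ℝ) (hp : 0 ≤ p) (hq : 0 < q)
    (hR : 0 < R) (h1 : R ≤ p + (1 + q)) (h2 : q ≤ p + R) :
    p ^ (-a) * (1 + q) ^ (-k) ≤
      (R / 2) ^ (-k) * (Set.Ioc 0 (2 * R)).indicator (fun t : ℝ => t ^ (-a)) p +
      (R / 2) ^ (-a) * (Set.Ioc 0 (2 * R)).indicator (fun t : ℝ => t ^ (-k)) q +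
      2 ^ a * (Set.Ioi (2 * R)).indicator (fun t : ℝ => t ^ (-(a + k))) q := by
  have hnn : ∀ (S : Set ℝ) (s t : ℝ), 0 ≤ t → 0 ≤ S.indicator (fun t : ℝ => t ^ (-s)) t :=
    fun S s t ht => Set.indicator_apply_nonneg fun _ => Real.rpow_nonneg ht _
  have e1 : 0 ≤ (R / 2) ^ (-k) * (Set.Ioc 0 (2 * R)).indicator (fun t : ℝ => t ^ (-a)) p :=
    mul_nonneg (by positivity) (hnn _ _ _ hp)
  have e2 : 0 ≤ (R / 2) ^ (-a) * (Set.Ioc 0 (2 * R)).indicator (fun t : ℝ => t ^ (-k)) q :=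
    mul_nonneg (by positivity) (hnn _ _ _ hq.le)
  have e3 : 0 ≤ (2 : ℝ) ^ a * (Set.Ioi (2 * R)).indicator (fun t : ℝ => t ^ (-(a + k))) q :=
    mul_nonneg (by positivity) (hnn _ _ _ hq.le)
  have hqk : (1 + q) ^ (-k) ≤ q ^ (-k) :=
    Real.rpow_le_rpow_of_nonpos hq (by linarith) (by linarith)
  rcases hp.eq_or_lt with rfl | hp0
  · rw [Real.zero_rpow (by linarith), zero_mul]
    linarith
  by_cases c1 : p ≤ R / 2
  · have : p ^ (-a) * (1 + q) ^ (-k) ≤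
        (R / 2) ^ (-k) * (Set.Ioc 0 (2 * R)).indicator (fun t : ℝ => t ^ (-a)) p := by
      rw [Set.indicator_of_mem (show p ∈ Set.Ioc 0 (2 * R) from ⟨hp0, by linarith⟩), mul_comm]
      exact mul_le_mul_of_nonneg_right
        (Real.rpow_le_rpow_of_nonpos (by linarith) (by linarith) (by linarith)) (by positivity)
    linarith
  push Not at c1
  by_cases c2 : q ≤ 2 * R
  · have : p ^ (-a) * (1 + q) ^ (-k) ≤
        (R / 2) ^ (-a) * (Set.Ioc 0 (2 * R)).indicator (fun t : ℝ => t ^ (-k)) q := by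
      rw [Set.indicator_of_mem (show q ∈ Set.Ioc 0 (2 * R) from ⟨hq, c2⟩)]
      exact mul_le_mul
        (Real.rpow_le_rpow_of_nonpos (by linarith) c1.le (by linarith)) hqk
        (by positivity) (by positivity)
    linarith
  · push Not at c2
    have : p ^ (-a) * (1 + q) ^ (-k) ≤
        2 ^ a * (Set.Ioi (2 * R)).indicator (fun t : ℝ => t ^ (-(a + k))) q := by
      rw [Set.indicator_of_mem (show q ∈ Set.Ioi (2 * R) from c2)]
      calc p ^ (-a) * (1 + q) ^ (-k) ≤ (q / 2) ^ (-a) * q ^ (-k) :=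
            mul_le_mul
              (Real.rpow_le_rpow_of_nonpos (by linarith) (by linarith) (by linarith)) hqk
              (by positivity) (by positivity)
        _ = 2 ^ a * q ^ (-(a + k)) := by
            rw [Real.div_rpow hq.le (by norm_num), neg_add, Real.rpow_add hq,
              Real.rpow_neg (by norm_num : (0 : ℝ) ≤ 2)]
            field_simp
    linarith

theorem stmt1 (N m : ℕ) (hm : 1 ≤ m) (hNm : 2 * m < N) (β : ℝ) (hβ0 : 0 < β)
    (hβ : β < (N : ℝ) - 2 * m) :
    ∃ C : ℝ, 0 < C ∧ ∀ y : EuclideanSpace ℝ (Fin N),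
      (∫ z : EuclideanSpace ℝ (Fin N),
          ‖y - z‖ ^ (-((N : ℝ) - 2 * m)) * (1 + ‖z‖) ^ (-(2 * (m : ℝ) + β))) ≤
        C * (1 + ‖y‖) ^ (-β) := by
  have hN : 1 ≤ N := by omega
  have : Nonempty (Fin N) := ⟨⟨0, hN⟩⟩
  have hm' : (1 : ℝ) ≤ m := by exact_mod_cast hm
  obtain ⟨a, ha⟩ : ∃ a, a = (N : ℝ) - 2 * m := ⟨_, rfl⟩
  obtain ⟨k, hk⟩ : ∃ k, k = 2 * (m : ℝ) + β := ⟨_, rfl⟩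
  rw [← ha, ← hk]
  have ha0 : 0 < a := by linarith
  have haN : a < N := by linarith
  have hk0 : 0 < k := by linarith
  have hkN : k < N := by linarith
  have hakN : N < a + k := by linarith
  obtain ⟨V, hV⟩ : ∃ V, V = N * volume.real (Metric.ball (0 : EuclideanSpace ℝ (Fin N)) 1) :=
    ⟨_, rfl⟩
  have hV0 : 0 ≤ V := by rw [hV]; positivity
  -- The three summands are the values of the three dominating integrals at `R = 1`;
  -- `1` is added only to make the constant visibly positive.
  refine ⟨(2⁻¹ ^ (-k) * (V * (2 ^ (N - a) / (N - a))) +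
    2⁻¹ ^ (-a) * (V * (2 ^ (N - k) / (N - k))) +
    2 ^ a * (V * (2 ^ (N - (a + k)) / (a + k - N)))) + 1, ?_, fun y => ?_⟩
  · have := sub_pos.2 haN
    have := sub_pos.2 hkN
    have := sub_pos.2 hakN
    positivity
  obtain ⟨R, hR⟩ : ∃ R, R = 1 + ‖y‖ := ⟨_, rfl⟩
  have hR0 : 0 < R := by rw [hR]; positivity
  rw [← hR]
  obtain ⟨i1, v1⟩ := integral_ball_norm_rpow N hN a haN (2 * R) (by positivity)
  obtain ⟨i2, v2⟩ := integral_ball_norm_rpow N hN k hkN (2 * R) (by positivity)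
  obtain ⟨i3, v3⟩ := integral_compl_ball_norm_rpow N hN (a + k) hakN (2 * R) (by positivity)
  have j1 := (i1.comp_sub_left y).const_mul ((R / 2) ^ (-k))
  have j2 := i2.const_mul ((R / 2) ^ (-a))
  have j3 := i3.const_mul ((2 : ℝ) ^ a)
  have hne : ∀ᵐ z : EuclideanSpace ℝ (Fin N), z ≠ 0 := by
    simp [ae_iff]
  calc _ ≤ ∫ z : EuclideanSpace ℝ (Fin N),
        ((R / 2) ^ (-k) * (Set.Ioc 0 (2 * R)).indicator (fun t : ℝ => t ^ (-a)) ‖y - z‖ +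
        (R / 2) ^ (-a) * (Set.Ioc 0 (2 * R)).indicator (fun t : ℝ => t ^ (-k)) ‖z‖ +
        2 ^ a * (Set.Ioi (2 * R)).indicator (fun t : ℝ => t ^ (-(a + k))) ‖z‖) := by
        refine integral_mono_of_nonneg (Filter.Eventually.of_forall fun z => by positivity)
          ((j1.add j2).add j3) ?_
        filter_upwards [hne] with z hz
        have t1 : ‖y‖ ≤ ‖y - z‖ + ‖z‖ := by simpa using norm_add_le (y - z) z
        have t2 : ‖z‖ ≤ ‖y - z‖ + ‖y‖ := by
          simpa [add_comm] using norm_sub_le y (y - z)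
        exact kernel_le a k ha0 hk0 _ _ R (norm_nonneg _) (norm_pos_iff.2 hz) hR0
          (by linarith) (by linarith)
    _ = (R / 2) ^ (-k) * (V * ((2 * R) ^ (N - a) / (N - a))) +
        (R / 2) ^ (-a) * (V * ((2 * R) ^ (N - k) / (N - k))) +
        2 ^ a * (V * ((2 * R) ^ (N - (a + k)) / (a + k - N))) := by
        rw [integral_add (by exact j1.add j2) j3, integral_add j1 j2, integral_const_mul,
          integral_const_mul, integral_const_mul, v2, v3,
          integral_sub_left_eq_self (fun z : EuclideanSpace ℝ (Fin N) =>
            (Set.Ioc 0 (2 * R)).indicator (fun t : ℝ => t ^ (-a)) ‖z‖) volume y, v1, hV]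
    _ = (2⁻¹ ^ (-k) * (V * (2 ^ (N - a) / (N - a))) +
        2⁻¹ ^ (-a) * (V * (2 ^ (N - k) / (N - k))) +
        2 ^ a * (V * (2 ^ (N - (a + k)) / (a + k - N)))) * R ^ (-β) := by
        have r1 : R ^ (-k) * R ^ (N - a) = R ^ (-β) := by
          rw [← Real.rpow_add hR0]; congr 1; rw [ha, hk]; ring
        have r2 : R ^ (-a) * R ^ (N - k) = R ^ (-β) := by
          rw [← Real.rpow_add hR0]; congr 1; rw [ha, hk]; ring
        have r3 : R ^ (N - (a + k)) = R ^ (-β) := by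
          congr 1; rw [ha, hk]; ring
        simp only [div_eq_mul_inv R 2, Real.mul_rpow hR0.le (by norm_num : (0 : ℝ) ≤ 2⁻¹),
          Real.mul_rpow (by norm_num : (0 : ℝ) ≤ 2) hR0.le, r3, add_mul]
        refine congrArg₂ _ (congrArg₂ _ ?_ ?_) ?_
        · rw [← r1]; ring
        · rw [← r2]; ring
        · ring
    _ ≤ _ := mul_le_mul_of_nonneg_right (by linarith) (by positivity)
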